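/- Crude soundness of the product tester (Raz–Safra style): Let C be an [n,k,d] code and m ≥ 3. Suppose r ∈ Σ^{[n]^m} has τ-soundness-error ε, i.e., Pr_{b,i}[δ_{C^{m-1}}(r_{b,i}) > τ] ≤ ε, where τ + 2ε ≤ (1/12)·((d−1)/n)^m. Then δ_{C^m}(r) ≤ 16·(n/d)^{m-1}·(τ + ε). -/

import Mathlib

/-- Relative Hamming distance between two words indexed by a finite type. -/
noncomputable def relHammingDist {ι F : Type} [Fintype ι] [DecidableEq F] (x y : ι → F) : ℝ :=
  (hammingDist x y : ℝ) / (Fintype.card ι)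

/-- Relative Hamming distance from a word to (the nearest codeword of) a code. -/
noncomputable def distToCode {ι F : Type} [Fintype ι] [DecidableEq F] (C : Set (ι → F)) (r : ι → F) : ℝ :=
  sInf (relHammingDist r '' C)

/-- Minimum Hamming distance of a code. -/
noncomputable def minDist {ι F : Type} [Fintype ι] [DecidableEq F] (C : Set (ι → F)) : ℕ :=
  sInf {e | ∃ x ∈ C, ∃ y ∈ C, x ≠ y ∧ hammingDist x y = e}

/-- The `m`-fold tensor power `C^m` of a code `C ⊆ F^n`. -/
def tensorPow {F : Type} {n : ℕ} (C : Set (Fin n → F)) (m : ℕ) :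
    Set ((Fin m → Fin n) → F) :=
  {r | ∀ (b : Fin m) (x : Fin m → Fin n), (fun i => r (Function.update x b i)) ∈ C}

/-- The slice `r_{b,i}`: fix the `b`-th coordinate of the array to `i`. -/
def sliceAt {F : Type} {n m : ℕ} (r : (Fin (m + 1) → Fin n) → F) (b : Fin (m + 1)) (i : Fin n) :
    (Fin m → Fin n) → F :=
  fun x => r (b.insertNth i x)

/-!
The Raz–Safra argument. Decode every slice of `r` in three directions `a`, `b`, `c` that see few
slices far from their code. Two decoded slices in different directions that disagree at one point
of their intersection disagree on at least `d ^ (m - 1)` points, each of which is an error of one of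
them, so few pairs are inconsistent. Discard the slices in directions `a` and `b` that are
inconsistent with many slices in direction `c`. Any two survivors are consistent: on a line in
direction `c` inside their intersection, both are codewords that agree with the `c`-slices, hence
with each other, in more than `n - d` places. Extending the surviving `a`-slices linearly along
direction `a` then gives a codeword of the tensor power, which differs from `r` only on discarded
slices and on decoding errors.
-/

section LinearCodes

open Finset

variable {F κ : Type*} [Field F] [DecidableEq F] [Fintype κ] {C : Submodule F (κ → F)} {D : ℕ}

/-- `D` is a lower bound for the minimum distance of the linear code `C`. Every `D` is one for the
zero code, on which `minDist` takes the junk value `sInf ∅ = 0`. -/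
def MinDistGE (C : Submodule F (κ → F)) (D : ℕ) : Prop :=
  ∀ w ∈ C, w ≠ 0 → D ≤ hammingNorm w

namespace MinDistGE

lemma bot : MinDistGE (⊥ : Submodule F (κ → F)) D :=
  fun _ hw hw0 => (hw0 hw).elim

lemma eq_of_eqOn [DecidableEq κ] (hC : MinDistGE C D) {u v : κ → F} (hu : u ∈ C) (hv : v ∈ C)
    {S : Finset κ} (hS : #Sᶜ < D) (huv : Set.EqOn u v S) : u = v := by
  by_contra hne
  have hnorm : D ≤ hammingNorm (u - v) := hC _ (C.sub_mem hu hv) (sub_ne_zero.2 hne)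
  refine hS.not_ge (hnorm.trans (card_le_card fun i hi => ?_))
  rw [mem_compl]
  exact fun hiS => (mem_filter.1 hi).2 (sub_eq_zero.2 (huv hiS))

lemma exists_matrix_extending [DecidableEq κ] (hC : MinDistGE C D) {S : Finset κ}
    (hS : #Sᶜ < D) :
    ∃ M : Matrix κ κ F, (∀ f, M.mulVec f ∈ C) ∧
      ∀ w ∈ C, ∀ f, Set.EqOn f w S → M.mulVec f = w := by
  let restrict : (κ → F) →ₗ[F] (S → F) := LinearMap.funLeft F F Subtype.val
  have restrict_injective : Function.Injective (restrict ∘ₗ C.subtype) := fun u v huv =>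
    Subtype.ext (hC.eq_of_eqOn u.2 v.2 hS fun i hi => congrFun huv ⟨i, hi⟩)
  obtain ⟨g, hg⟩ :=
    LinearMap.exists_leftInverse_of_injective _ (LinearMap.ker_eq_bot.2 restrict_injective)
  refine ⟨LinearMap.toMatrix' (C.subtype ∘ₗ g ∘ₗ restrict), fun f => ?_, fun w hw f hfw => ?_⟩
  · rw [LinearMap.toMatrix'_mulVec]
    exact (g (restrict f)).2
  · have hrestrict : restrict f = restrict w := funext fun i => hfw i.2
    have hgw : g (restrict w) = ⟨w, hw⟩ := LinearMap.congr_fun hg ⟨w, hw⟩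
    rw [LinearMap.toMatrix'_mulVec, LinearMap.comp_apply, LinearMap.comp_apply, hrestrict, hgw,
      Submodule.subtype_apply]

end MinDistGE

end LinearCodes

section MinDist

variable {F ι : Type} [DecidableEq F] [Fintype ι]

lemma minDist_le_card (C : Set (ι → F)) : minDist C ≤ Fintype.card ι := by
  obtain hempty | ⟨_, x, hx, y, hy, hxy, rfl⟩ :=
    Set.eq_empty_or_nonempty {e | ∃ x ∈ C, ∃ y ∈ C, x ≠ y ∧ hammingDist x y = e}
  · simp [minDist, hempty]
  · exact le_trans (Nat.sInf_le ⟨x, hx, y, hy, hxy, rfl⟩) hammingDist_le_card_fintype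

variable [Field F]

lemma minDistGE_minDist (C : Submodule F (ι → F)) : MinDistGE C (minDist (C : Set (ι → F))) :=
  fun w hw hw0 => Nat.sInf_le ⟨w, hw, 0, C.zero_mem, hw0, hammingDist_zero_right w⟩

lemma eq_bot_of_minDist_eq_zero {C : Submodule F (ι → F)}
    (hC : minDist (C : Set (ι → F)) = 0) : C = ⊥ := by
  refine (Submodule.eq_bot_iff C).2 fun w hw => ?_
  by_contra hw0
  obtain ⟨x, -, y, -, hxy, hdist⟩ :=
    Nat.sInf_mem (s := {e | ∃ x ∈ (C : Set (ι → F)), ∃ y ∈ (C : Set (ι → F)),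
      x ≠ y ∧ hammingDist x y = e}) ⟨_, w, hw, 0, C.zero_mem, hw0, rfl⟩
  exact hxy (hammingDist_eq_zero.1 (hdist.trans hC))

end MinDist

section DistToCode

variable {ι F : Type} [Fintype ι] [DecidableEq F] {C : Set (ι → F)}

lemma distToCode_le_relHammingDist {c : ι → F} (hc : c ∈ C) (r : ι → F) :
    distToCode C r ≤ relHammingDist r c := by
  refine csInf_le ⟨0, ?_⟩ ⟨c, hc, rfl⟩
  rintro _ ⟨y, -, rfl⟩
  unfold relHammingDist
  positivity

lemma distToCode_eq_zero_of_mem {r : ι → F} (hr : r ∈ C) : distToCode C r = 0 := by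
  refine le_antisymm ((distToCode_le_relHammingDist hr r).trans_eq (by simp [relHammingDist])) ?_
  refine Real.sInf_nonneg ?_
  rintro _ ⟨y, -, rfl⟩
  unfold relHammingDist
  positivity

lemma exists_relHammingDist_eq_distToCode (hC : C.Nonempty) (r : ι → F) :
    ∃ c ∈ C, relHammingDist r c = distToCode C r := by
  have hfinite : (hammingDist r '' C).Finite := by
    refine (Set.finite_le_nat (Fintype.card ι)).subset ?_
    rintro _ ⟨c, -, rfl⟩
    exact hammingDist_le_card_fintype
  have himage : relHammingDist r '' C =
      (fun e : ℕ => (e : ℝ) / Fintype.card ι) '' (hammingDist r '' C) := by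
    rw [Set.image_image]
    rfl
  exact (hC.image _).csInf_mem (himage ▸ hfinite.image _)

lemma mem_of_distToCode_lt (hC : C.Nonempty) {r : ι → F}
    (hr : distToCode C r < 1 / Fintype.card ι) : r ∈ C := by
  obtain ⟨c, hc, hrc⟩ := exists_relHammingDist_eq_distToCode hC r
  rw [← hrc, relHammingDist, div_eq_mul_inv, div_eq_mul_inv] at hr
  have hdist : (hammingDist r c : ℝ) < 1 := lt_of_mul_lt_mul_right hr (by positivity)
  have hrc' : r = c := hammingDist_lt_one.1 (by exact_mod_cast hdist)
  rwa [hrc']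

end DistToCode

section TensorAlong

open Finset Function

variable {F ι κ : Type*} [Field F] [DecidableEq ι] {C : Submodule F (κ → F)} {D : ℕ} {S T : Set ι}
  {a b c : ι}

/-- The arrays whose axis-parallel lines in the directions of `T` lie in `C`. The tensor power of
`C` is the case `T = univ`; the case `T = {a}ᶜ` consists of the arrays whose slices orthogonal to
`a` are all codewords of the next lower tensor power. -/
def tensorAlong (C : Submodule F (κ → F)) (T : Set ι) : Submodule F ((ι → κ) → F) where
  carrier := {f | ∀ e ∈ T, ∀ x, (fun j => f (update x e j)) ∈ C}
  add_mem' hf hg e he x := C.add_mem (hf e he x) (hg e he x)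
  zero_mem' _ _ _ := C.zero_mem
  smul_mem' s _ hf e he x := C.smul_mem s (hf e he x)

lemma tensorAlong_anti (C : Submodule F (κ → F)) (hST : S ⊆ T) :
    tensorAlong C T ≤ tensorAlong C S :=
  fun _ hf e he => hf e (hST he)

/-- The array obtained from `f` by applying the matrix `M` to every line in direction `a`. -/
def mulVecAlong [Fintype κ] (M : Matrix κ κ F) (a : ι) (f : (ι → κ) → F) : (ι → κ) → F :=
  fun x => M.mulVec (fun i => f (update x a i)) (x a)

lemma mulVecAlong_mem_tensorAlong [Fintype κ] {M : Matrix κ κ F} (hM : ∀ v, M.mulVec v ∈ C)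
    {f : (ι → κ) → F} (hf : f ∈ tensorAlong C {a}ᶜ) :
    mulVecAlong M a f ∈ tensorAlong C Set.univ := by
  intro e _ x
  obtain rfl | hea := eq_or_ne e a
  · simpa only [mulVecAlong, update_idem, update_self] using hM fun i => f (update x e i)
  · have hline : (fun j => mulVecAlong M a f (update x e j)) =
        ∑ i, M (x a) i • fun j => f (update (update x a i) e j) := by
      funext j
      simp only [mulVecAlong, Matrix.mulVec, dotProduct, update_of_ne hea.symm, update_comm hea,
        Finset.sum_apply, Pi.smul_apply, smul_eq_mul]
    rw [hline]
    exact C.sum_mem fun i _ => C.smul_mem _ (hf e hea _)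

variable [Fintype κ] [DecidableEq κ] [DecidableEq F]

lemma MinDistGE.pow_card_le_card_support [Fintype ι] (hC : MinDistGE C D) {f : (ι → κ) → F}
    {T : Finset ι} (hf : f ∈ tensorAlong C (T : Set ι)) {x : ι → κ} (hx : f x ≠ 0) :
    D ^ #T ≤ #{y | (∀ e ∉ T, y e = x e) ∧ f y ≠ 0} := by
  induction T using Finset.induction_on generalizing x with
  | empty => exact card_pos.2 ⟨x, by simp [hx]⟩
  | insert e T he ih =>
    set support : Finset (ι → κ) := {y | (∀ e' ∉ insert e T, y e' = x e') ∧ f y ≠ 0}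
    set lineSupport : Finset κ := {j | f (update x e j) ≠ 0}
    have hline : D ≤ #lineSupport :=
      hC _ (hf e (mem_insert_self e T) x) fun h => hx <| by simpa using congrFun h (x e)
    have hfibre : ∀ j ∈ lineSupport, D ^ #T ≤ #{y ∈ support | y e = j} := by
      intro j hj
      refine (ih (tensorAlong_anti C (coe_subset.2 (subset_insert e T)) hf)
        (mem_filter.1 hj).2).trans (card_le_card fun y hy => ?_)
      obtain ⟨hyx, hy0⟩ := (mem_filter.1 hy).2
      refine mem_filter.2 ⟨mem_filter.2 ⟨mem_univ y, fun e' he' => ?_, hy0⟩, ?_⟩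
      · rw [mem_insert, not_or] at he'
        rw [hyx e' he'.2, update_of_ne he'.1]
      · rw [hyx e he, update_self]
    calc D ^ #(insert e T) = D * D ^ #T := by rw [card_insert_of_notMem he, pow_succ']
      _ ≤ #lineSupport * D ^ #T := Nat.mul_le_mul_right _ hline
      _ ≤ ∑ j ∈ lineSupport, #{y ∈ support | y e = j} := card_nsmul_le_sum _ _ _ hfibre
      _ ≤ #support := (sum_card_fiberwise_eq_card_filter _ _ _).trans_le (card_filter_le _ _)

lemma MinDistGE.exists_tensor_eq_of_agree (hC : MinDistGE C D) (hab : a ≠ b)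
    {P P' : (ι → κ) → F} (hP : P ∈ tensorAlong C {a}ᶜ) (hP' : P' ∈ tensorAlong C {a})
    {A B : Finset κ} (hA : #Aᶜ < D) (hB : #Bᶜ < D)
    (hagree : ∀ x, x a ∈ A → x b ∈ B → P x = P' x) :
    ∃ R ∈ tensorAlong C Set.univ, ∀ x, x a ∈ A → R x = P x := by
  obtain ⟨M, hMC, hM⟩ := hC.exists_matrix_extending hA
  have hR := mulVecAlong_mem_tensorAlong hMC hP
  refine ⟨mulVecAlong M a P, hR, fun x hxA => ?_⟩
  have hcorner : ∀ y : ι → κ, y a ∈ A → y b ∈ B → mulVecAlong M a P y = P y := by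
    intro y hyA hyB
    have hline : M.mulVec (fun i => P (update y a i)) = fun i => P' (update y a i) :=
      hM _ (hP' a rfl y) _ fun i hi => hagree _ (by simpa using hi) (by simpa [hab.symm] using hyB)
    simp only [mulVecAlong, hline, update_eq_self, hagree y hyA hyB]
  have hslab : (fun j => mulVecAlong M a P (update x b j)) = fun j => P (update x b j) :=
    hC.eq_of_eqOn (hR b trivial x) (hP b hab.symm x) hB fun j hj =>
      hcorner _ (by simpa [hab] using hxA) (by simpa using hj)
  simpa using congrFun hslab (x b)

end TensorAlong

section Inconsistency

open Finset Function

variable {F ι κ : Type*} {a b c : ι}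

/-- The slice of `P` at `x a = i` and the slice of `P'` at `x b = j` disagree somewhere on their
intersection: an edge of the Raz–Safra inconsistency graph. -/
def Inconsistent (P P' : (ι → κ) → F) (a b : ι) (i j : κ) : Prop :=
  ∃ x, x a = i ∧ x b = j ∧ P x ≠ P' x

variable [Fintype ι] [DecidableEq ι] [Fintype κ] [DecidableEq κ] [DecidableEq F]

instance (P P' : (ι → κ) → F) (a b : ι) (i j : κ) : Decidable (Inconsistent P P' a b i j) :=
  inferInstanceAs (Decidable (∃ _, _))

/-- The indices `i` for which the slice of `P` at `x a = i` is within (absolute) distance `t` of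
that of `r`. -/
noncomputable def goodSlices (P r : (ι → κ) → F) (a : ι) (t : ℝ) : Finset κ :=
  {i | (#{x | x a = i ∧ P x ≠ r x} : ℝ) ≤ t}

lemma card_errors_goodSlices_le (P r : (ι → κ) → F) (a : ι) {t : ℝ} (ht : 0 ≤ t) :
    (#{x | x a ∈ goodSlices P r a t ∧ P x ≠ r x} : ℝ) ≤ Fintype.card κ * t := by
  have hfibre : ∀ i ∈ goodSlices P r a t,
      (#{x ∈ {x | x a ∈ goodSlices P r a t ∧ P x ≠ r x} | x a = i} : ℝ) ≤ t := by
    intro i hi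
    refine le_trans ?_ (mem_filter.1 hi).2
    gcongr
    simp +contextual [subset_iff]
  rw [card_eq_sum_card_fiberwise (f := fun x => x a) (t := goodSlices P r a t)
    fun x hx => (mem_filter.1 hx).2.1]
  push_cast
  calc _ ≤ #(goodSlices P r a t) • t := sum_le_card_nsmul _ _ _ hfibre
    _ = #(goodSlices P r a t) * t := nsmul_eq_mul _ _
    _ ≤ Fintype.card κ * t := by gcongr; exact card_le_univ _

variable [Field F] {C : Submodule F (κ → F)} {D : ℕ} {P P' Q : (ι → κ) → F}

lemma MinDistGE.card_inconsistent_mul_le (hC : MinDistGE C D) (hP : P ∈ tensorAlong C {a}ᶜ)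
    (hP' : P' ∈ tensorAlong C {b}ᶜ) (r : (ι → κ) → F) (A B : Finset κ) :
    #{p ∈ A ×ˢ B | Inconsistent P P' a b p.1 p.2} * D ^ #({a, b}ᶜ : Finset ι) ≤
      #{x | x a ∈ A ∧ P x ≠ r x} + #{x | x b ∈ B ∧ P' x ≠ r x} := by
  set conflicts : Finset (ι → κ) := {x | (x a ∈ A ∧ x b ∈ B) ∧ P x ≠ P' x} with hconflicts
  have hsub : P - P' ∈ tensorAlong C (({a, b}ᶜ : Finset ι) : Set ι) :=
    Submodule.sub_mem _ (tensorAlong_anti C (by simp) hP) (tensorAlong_anti C (by simp) hP')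
  have hpair : ∀ p ∈ ({p ∈ A ×ˢ B | Inconsistent P P' a b p.1 p.2} : Finset (κ × κ)),
      D ^ #({a, b}ᶜ : Finset ι) ≤ #{x ∈ conflicts | (x a, x b) = p} := by
    rintro ⟨i, j⟩ hp
    obtain ⟨hij, x, rfl, rfl, hx⟩ := mem_filter.1 hp
    refine (hC.pow_card_le_card_support hsub (x := x) (sub_ne_zero.2 hx)).trans
      (card_le_card fun y hy => ?_)
    obtain ⟨hyx, hy⟩ := (mem_filter.1 hy).2
    have hya : y a = x a := hyx a (by simp)
    have hyb : y b = x b := hyx b (by simp)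
    simpa [hconflicts, hya, hyb, mem_product.1 hij] using sub_ne_zero.1 hy
  calc _ ≤ ∑ p ∈ A ×ˢ B with Inconsistent P P' a b p.1 p.2, #{x ∈ conflicts | (x a, x b) = p} :=
        card_nsmul_le_sum _ _ _ hpair
    _ ≤ #conflicts := (sum_card_fiberwise_eq_card_filter _ _ _).trans_le (card_filter_le _ _)
    _ ≤ #(({x | x a ∈ A ∧ P x ≠ r x} : Finset (ι → κ)) ∪
          ({x | x b ∈ B ∧ P' x ≠ r x} : Finset _)) := by
        refine card_le_card fun x hx => ?_
        obtain ⟨⟨hxA, hxB⟩, hx⟩ := (mem_filter.1 hx).2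
        by_cases hr : P x = r x
        · simp [hxB, hr ▸ hx.symm]
        · simp [hxA, hr]
    _ ≤ _ := card_union_le _ _

lemma MinDistGE.eq_of_few_inconsistent (hC : MinDistGE C D) (hac : a ≠ c) (hbc : b ≠ c)
    (hP : P ∈ tensorAlong C {c}) (hP' : P' ∈ tensorAlong C {c}) (Q : (ι → κ) → F) (B : Finset κ)
    {x : ι → κ}
    (hx : #Bᶜ + #{k ∈ B | Inconsistent P Q a c (x a) k} +
      #{k ∈ B | Inconsistent P' Q b c (x b) k} < D) :
    P x = P' x := by
  set bad : Finset κ := Bᶜ ∪ {k ∈ B | Inconsistent P Q a c (x a) k} ∪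
    {k ∈ B | Inconsistent P' Q b c (x b) k} with hbad
  have hcard : #(badᶜ)ᶜ < D := by
    rw [compl_compl]
    exact ((card_union_le _ _).trans (Nat.add_le_add_right (card_union_le _ _) _)).trans_lt hx
  have hline : (fun k => P (update x c k)) = fun k => P' (update x c k) := by
    refine hC.eq_of_eqOn (hP c rfl x) (hP' c rfl x) hcard fun k hk => ?_
    simp only [hbad, coe_compl, Set.mem_compl_iff, mem_coe, mem_union, mem_compl, mem_filter,
      not_or, not_not, not_and] at hk
    obtain ⟨⟨hkB, hPQ⟩, hP'Q⟩ := hk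
    have hPk : P (update x c k) = Q (update x c k) := by
      by_contra h
      exact hPQ hkB ⟨_, update_of_ne hac _ _, update_self _ _ _, h⟩
    have hP'k : P' (update x c k) = Q (update x c k) := by
      by_contra h
      exact hP'Q hkB ⟨_, update_of_ne hbc _ _, update_self _ _ _, h⟩
    exact hPk.trans hP'k.symm
  simpa using congrFun hline (x c)

/-- The good slices of `P` in direction `a` that are inconsistent with fewer than `D / 4` of the
good slices of `Q` in direction `c`. -/
noncomputable def consistentSlices (P Q r : (ι → κ) → F) (a c : ι) (t : ℝ) (D : ℕ) : Finset κ :=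
  {i ∈ goodSlices P r a t | 4 * #{k ∈ goodSlices Q r c t | Inconsistent P Q a c i k} < D}

lemma card_filter_degree_mul_le {α β : Type*} (R : α → β → Prop) [∀ i j, Decidable (R i j)]
    (A : Finset α) (B : Finset β) (d k : ℕ) :
    #{i ∈ A | d ≤ k * #{j ∈ B | R i j}} * d ≤ k * #{p ∈ A ×ˢ B | R p.1 p.2} := by
  have hdegree : #{p ∈ A ×ˢ B | R p.1 p.2} = ∑ i ∈ A, #{j ∈ B | R i j} := by
    simp only [card_filter, sum_product]
  calc _ ≤ ∑ i ∈ A with d ≤ k * #{j ∈ B | R i j}, k * #{j ∈ B | R i j} :=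
        card_nsmul_le_sum _ _ _ fun i hi => (mem_filter.1 hi).2
    _ ≤ ∑ i ∈ A, k * #{j ∈ B | R i j} := sum_le_sum_of_subset (filter_subset _ _)
    _ = k * #{p ∈ A ×ˢ B | R p.1 p.2} := by rw [hdegree, mul_sum]

lemma MinDistGE.card_sdiff_consistentSlices_mul_le (hC : MinDistGE C D) (hac : a ≠ c)
    (hP : P ∈ tensorAlong C {a}ᶜ) (hQ : Q ∈ tensorAlong C {c}ᶜ) (r : (ι → κ) → F) {t : ℝ}
    (ht : 0 ≤ t) :
    (#(goodSlices P r a t \ consistentSlices P Q r a c t D) : ℝ) * D ^ (Fintype.card ι - 1) ≤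
      8 * (Fintype.card κ * t) := by
  set A := goodSlices P r a t with hA
  set B := goodSlices Q r c t with hB
  have hsdiff : A \ consistentSlices P Q r a c t D =
      {i ∈ A | D ≤ 4 * #{k ∈ B | Inconsistent P Q a c i k}} := by
    simp only [consistentSlices, ← hA, ← hB, ← not_lt, filter_not]
  have hexponent : Fintype.card ι - 1 = #({a, c}ᶜ : Finset ι) + 1 := by
    have hcard := card_add_card_compl ({a, c} : Finset ι)
    rw [card_pair hac] at hcard
    omega
  have hcount : #(A \ consistentSlices P Q r a c t D) * D ^ (Fintype.card ι - 1) ≤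
      4 * (#{x | x a ∈ A ∧ P x ≠ r x} + #{x | x c ∈ B ∧ Q x ≠ r x}) := by
    rw [hsdiff, hexponent, pow_succ', ← mul_assoc]
    calc _ ≤ 4 * #{p ∈ A ×ˢ B | Inconsistent P Q a c p.1 p.2} * D ^ #({a, c}ᶜ : Finset ι) :=
          Nat.mul_le_mul_right _ (card_filter_degree_mul_le _ A B D 4)
      _ ≤ _ := by
          rw [mul_assoc]
          exact Nat.mul_le_mul_left 4 (hC.card_inconsistent_mul_le hP hQ r A B)
  calc _ ≤ 4 * ((#{x | x a ∈ A ∧ P x ≠ r x} : ℝ) + #{x | x c ∈ B ∧ Q x ≠ r x}) := by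
        exact_mod_cast hcount
    _ ≤ 4 * (Fintype.card κ * t + Fintype.card κ * t) := by
        gcongr
        exacts [card_errors_goodSlices_le P r a ht, card_errors_goodSlices_le Q r c ht]
    _ = _ := by ring

lemma MinDistGE.card_compl_consistentSlices_le (hC : MinDistGE C D) (hD : 0 < D) (hac : a ≠ c)
    (hP : P ∈ tensorAlong C {a}ᶜ) (hQ : Q ∈ tensorAlong C {c}ᶜ) (r : (ι → κ) → F) {t : ℝ}
    (ht : 0 ≤ t) :
    (#(consistentSlices P Q r a c t D)ᶜ : ℝ) ≤
      #(goodSlices P r a t)ᶜ + 8 * (Fintype.card κ * t) / D ^ (Fintype.card ι - 1) := by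
  have hcover : (consistentSlices P Q r a c t D)ᶜ ⊆
      (goodSlices P r a t)ᶜ ∪ (goodSlices P r a t \ consistentSlices P Q r a c t D) := by
    intro i hi
    simp only [mem_union, mem_compl, mem_sdiff] at hi ⊢
    tauto
  calc _ ≤ (#(goodSlices P r a t)ᶜ : ℝ) +
        #(goodSlices P r a t \ consistentSlices P Q r a c t D) := by
        exact_mod_cast (card_le_card hcover).trans (card_union_le _ _)
    _ ≤ _ := by
        gcongr
        rw [le_div_iff₀ (by positivity)]
        exact hC.card_sdiff_consistentSlices_mul_le hac hP hQ r ht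

lemma card_filter_apply_mem (a : ι) (A : Finset κ) :
    #{x : ι → κ | x a ∈ A} = #A * Fintype.card κ ^ (Fintype.card ι - 1) := by
  have hslab : ∀ i ∈ A, #{x : ι → κ | x a = i} = Fintype.card κ ^ (Fintype.card ι - 1) :=
    fun i _ => by simpa using Fintype.card_filter_piFinset_const (univ : Finset κ) a i
  rw [← sum_card_fiberwise_eq_card_filter, sum_congr rfl hslab, sum_const, smul_eq_mul]

lemma MinDistGE.exists_tensor_hammingDist_le (hC : MinDistGE C D) (hab : a ≠ b) (hac : a ≠ c)
    (hbc : b ≠ c) (hP : P ∈ tensorAlong C {a}ᶜ) (hP' : P' ∈ tensorAlong C {b}ᶜ)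
    (Q r : (ι → κ) → F) {t : ℝ} (ht : 0 ≤ t)
    (hA : #(consistentSlices P Q r a c t D)ᶜ < D) (hB : #(consistentSlices P' Q r b c t D)ᶜ < D)
    (hG : 2 * #(goodSlices Q r c t)ᶜ < D) :
    ∃ R ∈ tensorAlong C Set.univ, (hammingDist r R : ℝ) ≤
      #(consistentSlices P Q r a c t D)ᶜ * Fintype.card κ ^ (Fintype.card ι - 1) +
        Fintype.card κ * t := by
  set A := consistentSlices P Q r a c t D
  set B := consistentSlices P' Q r b c t D
  have hagree : ∀ x, x a ∈ A → x b ∈ B → P x = P' x := by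
    intro x hxA hxB
    have hdegA := (mem_filter.1 hxA).2
    have hdegB := (mem_filter.1 hxB).2
    exact hC.eq_of_few_inconsistent hac hbc (tensorAlong_anti C (by simpa using hac) hP)
      (tensorAlong_anti C (by simpa using hbc) hP') Q (goodSlices Q r c t) (by omega)
  obtain ⟨R, hR, hRP⟩ := hC.exists_tensor_eq_of_agree hab hP
    (tensorAlong_anti C (by simpa using hab.symm) hP') hA hB hagree
  refine ⟨R, hR, ?_⟩
  have hcover : ({x | r x ≠ R x} : Finset (ι → κ)) ⊆
      ({x | x a ∈ Aᶜ} : Finset _) ∪ ({x | x a ∈ goodSlices P r a t ∧ P x ≠ r x} : Finset _) := by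
    intro x hx
    by_cases hxA : x a ∈ A
    · have hrP : P x ≠ r x := hRP x hxA ▸ (mem_filter.1 hx).2.symm
      exact mem_union_right _ (by simp [(mem_filter.1 hxA).1, hrP])
    · exact mem_union_left _ (by simp [hxA])
  calc (hammingDist r R : ℝ)
      ≤ #{x : ι → κ | x a ∈ Aᶜ} + #{x | x a ∈ goodSlices P r a t ∧ P x ≠ r x} := by
        exact_mod_cast (card_le_card hcover).trans (card_union_le _ _)
    _ ≤ _ := by
        rw [card_filter_apply_mem]
        push_cast
        gcongr
        exact card_errors_goodSlices_le P r a ht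

end Inconsistency

section Averaging

open Finset

lemma exists_three_le_three_mul_average {ι : Type*} [Fintype ι] (hι : 3 ≤ Fintype.card ι)
    {f : ι → ℝ} (hf : ∀ i, 0 ≤ f i) {t : ℝ} (ht : ∑ i, f i ≤ Fintype.card ι * t) :
    ∃ a b c, a ≠ b ∧ a ≠ c ∧ b ≠ c ∧ f a ≤ 3 * t ∧ f b ≤ 3 * t ∧ f c ≤ 3 * t := by
  classical
  set small : Finset ι := {i | f i ≤ 3 * t} with hsmall
  have ht0 : 0 ≤ t := by
    have hcard : (0 : ℝ) < Fintype.card ι := by exact_mod_cast (by omega : 0 < Fintype.card ι)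
    exact nonneg_of_mul_nonneg_right ((sum_nonneg fun i _ => hf i).trans ht) hcard
  have hcompl := card_add_card_compl small
  have htwo : 2 < #small := by
    by_contra! hle
    have hne : smallᶜ.Nonempty := card_pos.1 (by omega)
    have hcount : (Fintype.card ι : ℝ) ≤ #smallᶜ * 3 := by
      exact_mod_cast (by omega : Fintype.card ι ≤ #smallᶜ * 3)
    refine lt_irrefl (∑ i, f i) ?_
    calc ∑ i, f i ≤ Fintype.card ι * t := ht
      _ ≤ #smallᶜ * 3 * t := by gcongr
      _ = ∑ i ∈ smallᶜ, 3 * t := by rw [sum_const, nsmul_eq_mul, mul_assoc]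
      _ < ∑ i ∈ smallᶜ, f i := sum_lt_sum_of_nonempty hne fun i hi => by simpa [hsmall] using hi
      _ ≤ ∑ i, f i := sum_le_univ_sum_of_nonneg hf
  obtain ⟨a, ha, b, hb, c, hc, hab, hac, hbc⟩ := two_lt_card.1 htwo
  exact ⟨a, b, c, hab, hac, hbc, (mem_filter.1 ha).2, (mem_filter.1 hb).2, (mem_filter.1 hc).2⟩

lemma exists_three_card_fibre_le {ι κ : Type*} [Fintype ι] [Fintype κ]
    (hι : 3 ≤ Fintype.card ι) (R : ι × κ → Prop) [DecidablePred R] {t : ℝ}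
    (ht : (#{p | R p} : ℝ) ≤ Fintype.card ι * t) :
    ∃ a b c, a ≠ b ∧ a ≠ c ∧ b ≠ c ∧ (#{i | R (a, i)} : ℝ) ≤ 3 * t ∧
      (#{i | R (b, i)} : ℝ) ≤ 3 * t ∧ (#{i | R (c, i)} : ℝ) ≤ 3 * t := by
  have hfibres : #{p | R p} = ∑ e, #{i | R (e, i)} := by
    simp only [card_filter, Fintype.sum_prod_type]
  rw [hfibres, Nat.cast_sum] at ht
  exact exists_three_le_three_mul_average hι (fun e => by positivity) ht

end Averaging

section ProductTester

open Finset Function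

variable {F : Type} [Field F] {n m D : ℕ} {C : Submodule F (Fin n → F)}

lemma coe_tensorAlong_univ (C : Submodule F (Fin n → F)) (m : ℕ) :
    (tensorAlong C (Set.univ : Set (Fin m)) : Set ((Fin m → Fin n) → F)) =
      tensorPow (C : Set (Fin n → F)) m := by
  ext f
  simp [tensorAlong, tensorPow]

lemma zero_mem_tensorPow (C : Submodule F (Fin n → F)) (m : ℕ) :
    0 ∈ tensorPow (C : Set (Fin n → F)) m :=
  fun _ _ => C.zero_mem

variable [DecidableEq F]

lemma exists_slicewise_closest (C : Submodule F (Fin n → F)) (r : (Fin (m + 1) → Fin n) → F)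
    (a : Fin (m + 1)) :
    ∃ P ∈ tensorAlong C {a}ᶜ, ∀ i, (#{x | x a = i ∧ P x ≠ r x} : ℝ) ≤
      distToCode (tensorPow (C : Set (Fin n → F)) m) (sliceAt r a i) * n ^ m := by
  choose c hc hdist using fun i =>
    exists_relHammingDist_eq_distToCode ⟨0, zero_mem_tensorPow C m⟩ (sliceAt r a i)
  refine ⟨fun x => c (x a) (a.removeNth x), fun e he x => ?_, fun i => ?_⟩
  · obtain ⟨e, rfl⟩ := Fin.exists_succAbove_eq he
    simpa [Fin.removeNth_update_succAbove] using hc (x a) e (a.removeNth x)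
  · have hcard : #{x | x a = i ∧ c (x a) (a.removeNth x) ≠ r x} ≤
        hammingDist (sliceAt r a i) (c i) := by
      refine card_le_card_of_injOn a.removeNth ?_ ?_
      · rintro x hx
        obtain ⟨rfl, hxr⟩ := (mem_filter.1 hx).2
        exact mem_filter.2 ⟨mem_univ _, by simpa [sliceAt] using hxr.symm⟩
      · intro x hx y hy hxy
        rw [← Fin.insertNth_self_removeNth a x, ← Fin.insertNth_self_removeNth a y, hxy,
          (mem_filter.1 hx).2.1, (mem_filter.1 hy).2.1]
    have hn : 0 < n := i.pos
    rw [← hdist i, relHammingDist, Fintype.card_pi_const, Nat.cast_pow,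
      Fintype.card_fin, div_mul_cancel₀ _ (by positivity)]
    exact_mod_cast hcard

lemma exists_slicewise_decoding (C : Submodule F (Fin n → F)) (r : (Fin (m + 1) → Fin n) → F)
    (a : Fin (m + 1)) (τ : ℝ) :
    ∃ P ∈ tensorAlong C {a}ᶜ, #(goodSlices P r a (τ * n ^ m))ᶜ ≤
      #{i | τ < distToCode (tensorPow (C : Set (Fin n → F)) m) (sliceAt r a i)} := by
  obtain ⟨P, hP, hclosest⟩ := exists_slicewise_closest C r a
  refine ⟨P, hP, card_le_card fun i hi => ?_⟩
  have hfar : τ * (n : ℝ) ^ m < #{x | x a = i ∧ P x ≠ r x} := by simpa [goodSlices] using hi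
  exact mem_filter.2
    ⟨mem_univ i, lt_of_mul_lt_mul_right (hfar.trans_le (hclosest i)) (by positivity)⟩

lemma consistency_thresholds {x n τ ε : ℝ} (hx : 0 < x) (hxn : x ≤ n) (hτ : 0 ≤ τ) (hε : 0 ≤ ε)
    (hcond : τ + 2 * ε ≤ 1 / 12 * (x / n) ^ (m + 1)) :
    n * (3 * ε) + n * (8 * τ * (n / x) ^ m) < x ∧ 2 * (n * (3 * ε)) < x := by
  have hn : 0 < n := hx.trans_le hxn
  have hratio : 1 ≤ (n / x) ^ m := one_le_pow₀ ((one_le_div hx).2 hxn)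
  have hscaled : 12 * (n * ((n / x) ^ m * (τ + 2 * ε))) ≤ x :=
    calc _ ≤ 12 * (n * ((n / x) ^ m * (1 / 12 * (x / n) ^ (m + 1)))) := by gcongr
      _ = n * (x / n) * ((n / x) * (x / n)) ^ m := by rw [mul_pow]; ring
      _ = x := by rw [div_mul_div_cancel₀ hx.ne', div_self hn.ne', one_pow, mul_one,
          mul_div_cancel₀ _ hn.ne']
  have hετ : n * ε ≤ n * ((n / x) ^ m * ε) := by
    gcongr
    exact le_mul_of_one_le_left hε hratio
  have hτ0 : 0 ≤ n * ((n / x) ^ m * τ) := by positivity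
  constructor <;> nlinarith

lemma MinDistGE.card_compl_consistentSlices_le_of_decoding (hC : MinDistGE C D) (hD : 0 < D)
    {a c : Fin (m + 1)} (hac : a ≠ c) {P Q r : (Fin (m + 1) → Fin n) → F}
    (hP : P ∈ tensorAlong C {a}ᶜ) (hQ : Q ∈ tensorAlong C {c}ᶜ) {τ ε : ℝ} (hτ : 0 ≤ τ)
    (hgood : (#(goodSlices P r a (τ * n ^ m))ᶜ : ℝ) ≤ n * (3 * ε)) :
    (#(consistentSlices P Q r a c (τ * n ^ m) D)ᶜ : ℝ) ≤
      n * (3 * ε) + n * (8 * τ * (n / D) ^ m) := by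
  have hcompl := hC.card_compl_consistentSlices_le hD hac hP hQ r
    (mul_nonneg hτ (pow_nonneg n.cast_nonneg m))
  simp only [Fintype.card_fin, Nat.add_sub_cancel] at hcompl
  calc _ ≤ _ := hcompl
    _ ≤ n * (3 * ε) + 8 * (n * (τ * n ^ m)) / D ^ m := by gcongr
    _ = _ := by rw [div_pow]; ring

lemma MinDistGE.exists_tensorPow_hammingDist_le (hm : 2 ≤ m) (hC : MinDistGE C D) (hD : 0 < D)
    (hDn : D ≤ n) (r : (Fin (m + 1) → Fin n) → F) {τ ε : ℝ} (hτ : 0 ≤ τ) (hε : 0 ≤ ε)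
    (hsound : (#{p : Fin (m + 1) × Fin n |
      τ < distToCode (tensorPow (C : Set (Fin n → F)) m) (sliceAt r p.1 p.2)} : ℝ) ≤
        ε * ((m + 1) * n))
    (hcond : τ + 2 * ε ≤ 1 / 12 * (D / n) ^ (m + 1)) :
    ∃ R ∈ tensorPow (C : Set (Fin n → F)) (m + 1),
      (hammingDist r R : ℝ) ≤ n ^ (m + 1) * (3 * ε + 8 * τ * (n / D) ^ m + τ) := by
  obtain ⟨a, b, c, hab, hac, hbc, ha, hb, hc⟩ :=
    exists_three_card_fibre_le (by rw [Fintype.card_fin]; omega) _ (t := ε * n)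
      (hsound.trans_eq (by push_cast [Fintype.card_fin]; ring))
  obtain ⟨P, hP, hPgood⟩ := exists_slicewise_decoding C r a τ
  obtain ⟨P', hP', hP'good⟩ := exists_slicewise_decoding C r b τ
  obtain ⟨Q, hQ, hQgood⟩ := exists_slicewise_decoding C r c τ
  have few_bad {k l : ℕ} (hkl : k ≤ l) (hl : (l : ℝ) ≤ 3 * (ε * n)) : (k : ℝ) ≤ n * (3 * ε) :=
    (Nat.cast_le.2 hkl).trans (hl.trans_eq (by ring))
  have hA := hC.card_compl_consistentSlices_le_of_decoding hD hac hP hQ hτ (few_bad hPgood ha)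
  have hB := hC.card_compl_consistentSlices_le_of_decoding hD hbc hP' hQ hτ (few_bad hP'good hb)
  obtain ⟨hAB, hG⟩ := consistency_thresholds (Nat.cast_pos.2 hD) (Nat.cast_le.2 hDn) hτ hε hcond
  obtain ⟨R, hR, hRr⟩ := hC.exists_tensor_hammingDist_le hab hac hbc hP hP' Q r
    (mul_nonneg hτ (pow_nonneg n.cast_nonneg m))
    (by exact_mod_cast hA.trans_lt hAB) (by exact_mod_cast hB.trans_lt hAB)
    (by exact_mod_cast (mul_le_mul_of_nonneg_left (few_bad hQgood hc) two_pos.le).trans_lt hG)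
  refine ⟨R, coe_tensorAlong_univ C (m + 1) ▸ hR, hRr.trans ?_⟩
  simp only [Fintype.card_fin, Nat.add_sub_cancel]
  calc _ ≤ (n * (3 * ε) + n * (8 * τ * (n / D) ^ m)) * (n : ℝ) ^ m + n * (τ * n ^ m) := by gcongr
    _ = _ := by ring

lemma MinDistGE.distToCode_tensorPow_le (hm : 2 ≤ m) (hC : MinDistGE C D) (hD : 0 < D)
    (hDn : D ≤ n) (r : (Fin (m + 1) → Fin n) → F) {τ ε : ℝ} (hτ : 0 ≤ τ) (hε : 0 ≤ ε)
    (hsound : (#{p : Fin (m + 1) × Fin n |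
      τ < distToCode (tensorPow (C : Set (Fin n → F)) m) (sliceAt r p.1 p.2)} : ℝ) ≤
        ε * ((m + 1) * n))
    (hcond : τ + 2 * ε ≤ 1 / 12 * (D / n) ^ (m + 1)) :
    distToCode (tensorPow (C : Set (Fin n → F)) (m + 1)) r ≤ (n / D) ^ m * (9 * τ + 3 * ε) := by
  obtain ⟨R, hR, hRr⟩ :=
    hC.exists_tensorPow_hammingDist_le hm hD hDn r hτ hε hsound hcond
  have hratio : 1 ≤ ((n : ℝ) / D) ^ m :=
    one_le_pow₀ ((one_le_div (by positivity)).2 (Nat.cast_le.2 hDn))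
  have hn : 0 < n := hD.trans_le hDn
  calc _ ≤ relHammingDist r R := distToCode_le_relHammingDist hR r
    _ ≤ 3 * ε + 8 * τ * (n / D) ^ m + τ := by
        rw [relHammingDist, Fintype.card_pi_const, Fintype.card_fin, Nat.cast_pow,
          div_le_iff₀' (by positivity)]
        exact hRr
    _ ≤ (n / D) ^ m * (9 * τ + 3 * ε) := by nlinarith

lemma distToCode_tensorPow_bot_eq_zero (hm : 2 ≤ m) (hn : 0 < n)
    (r : (Fin (m + 1) → Fin n) → F) {τ ε : ℝ} (hτ : 0 ≤ τ) (hε : 0 ≤ ε)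
    (hsound : (#{p : Fin (m + 1) × Fin n | τ < distToCode
      (tensorPow ((⊥ : Submodule F (Fin n → F)) : Set (Fin n → F)) m) (sliceAt r p.1 p.2)} : ℝ) ≤
        ε * ((m + 1) * n))
    (hcond : τ + 2 * ε ≤ 1 / 12 * (1 / n) ^ (m + 1)) :
    distToCode (tensorPow ((⊥ : Submodule F (Fin n → F)) : Set (Fin n → F)) (m + 1)) r = 0 := by
  have hpos : (0 : ℝ) < (1 / n) ^ (m + 1) := by positivity
  have hn1 : (1 : ℝ) ≤ n := Nat.one_le_cast.2 hn
  -- `n` bounds the distance of the zero code, so `r` is within less than one entry of the power.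
  have hdist := MinDistGE.bot.distToCode_tensorPow_le hm hn le_rfl r hτ hε hsound
    (hcond.trans (by gcongr))
  rw [div_self (by positivity), one_pow, one_mul] at hdist
  refine distToCode_eq_zero_of_mem (mem_of_distToCode_lt ⟨0, zero_mem_tensorPow ⊥ (m + 1)⟩ ?_)
  rw [Fintype.card_pi_const, Fintype.card_fin, Nat.cast_pow, ← one_div_pow]
  linarith

end ProductTester

lemma sub_one_div_pow_le_max_one_div_pow (d n k : ℕ) :
    (((d : ℝ) - 1) / n) ^ k ≤ (max (d : ℝ) 1 / n) ^ k := by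
  have habs : |(d : ℝ) - 1| ≤ max (d : ℝ) 1 :=
    abs_le.2 ⟨by linarith [le_max_right (d : ℝ) 1], by linarith [le_max_left (d : ℝ) 1]⟩
  calc (((d : ℝ) - 1) / n) ^ k ≤ |((d : ℝ) - 1) / n| ^ k := (le_abs_self _).trans_eq (abs_pow _ _)
    _ ≤ (max (d : ℝ) 1 / n) ^ k := by
        rw [abs_div, Nat.abs_cast]
        gcongr

-- For the zero code `minDist` is `0`, and a bound with `d` instead of `max d 1` would not follow
-- from one with `d - 1`: the power `(0 - 1) ^ (m + 1)` is positive when `m` is odd.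
open Finset in
theorem crude_soundness_general {F : Type} [Field F] [DecidableEq F] {n d m : ℕ} (hm : 2 ≤ m)
    (C : Submodule F (Fin n → F)) (hd : minDist (C : Set (Fin n → F)) = d)
    (r : (Fin (m + 1) → Fin n) → F) {τ ε : ℝ} (hτ : 0 ≤ τ) (hε : 0 ≤ ε)
    (hsound : (#{p : Fin (m + 1) × Fin n |
      τ < distToCode (tensorPow (C : Set (Fin n → F)) m) (sliceAt r p.1 p.2)} : ℝ) ≤
        ε * ((m + 1) * n))
    (hcond : τ + 2 * ε ≤ 1 / 12 * (max (d : ℝ) 1 / n) ^ (m + 1)) :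
    distToCode (tensorPow (C : Set (Fin n → F)) (m + 1)) r ≤
      ((n : ℝ) / d) ^ m * (9 * τ + 3 * ε) := by
  obtain rfl | hn := n.eq_zero_or_pos
  · exact (distToCode_eq_zero_of_mem fun _ x => (x 0).elim0).trans_le (by positivity)
  obtain rfl | hd0 := d.eq_zero_or_pos
  · obtain rfl := eq_bot_of_minDist_eq_zero hd
    refine (distToCode_tensorPow_bot_eq_zero hm hn r hτ hε hsound ?_).trans_le (by positivity)
    simpa using hcond
  · have hdn : d ≤ n := hd ▸ (minDist_le_card _).trans_eq (Fintype.card_fin n)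
    rw [max_eq_left (Nat.one_le_cast.2 hd0)] at hcond
    exact (hd ▸ minDistGE_minDist C).distToCode_tensorPow_le hm hd0 hdn r hτ hε hsound hcond

open scoped Classical in
/-- Crude soundness of the product tester (Raz–Safra style). Let `C` be
an `[n,k,d]` code and the ambient dimension `m+1 ≥ 3`. Suppose `r ∈ F^{[n]^{m+1}}` has
`τ`-soundness-error `ε`: the fraction of pairs `(b,i)` with `δ_{C^m}(r_{b,i}) > τ` is at
most `ε`, where `τ + 2ε ≤ (1/12)·((d−1)/n)^{m+1}`. Then
`δ_{C^{m+1}}(r) ≤ 16·(n/d)^m·(τ + ε)`. -/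
theorem crude_soundness
    {F : Type} [Field F] [Fintype F] [DecidableEq F] {n k d m : ℕ} (hm : 2 ≤ m)
    (C : Submodule F (Fin n → F))
    (hk : Module.finrank F C = k)
    (hd : minDist (C : Set (Fin n → F)) = d)
    (r : (Fin (m + 1) → Fin n) → F) (τ ε : ℝ) (hτ : 0 ≤ τ) (hε : 0 ≤ ε)
    (hsound : ((Finset.univ.filter (fun p : Fin (m + 1) × Fin n =>
        τ < distToCode (tensorPow (C : Set (Fin n → F)) m) (sliceAt r p.1 p.2))).card : ℝ)
        ≤ ε * ((m + 1) * n))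
    (hcond : τ + 2 * ε ≤ (1 / 12) * (((d : ℝ) - 1) / n) ^ (m + 1)) :
    distToCode (tensorPow (C : Set (Fin n → F)) (m + 1)) r ≤
      16 * ((n : ℝ) / d) ^ m * (τ + ε) := by
  exact (crude_soundness_general hm C hd r hτ hε hsound (hcond.trans <| mul_le_mul_of_nonneg_left
    (sub_one_div_pow_le_max_one_div_pow d n (m + 1)) (by norm_num))).trans
      (by nlinarith [pow_nonneg (div_nonneg n.cast_nonneg d.cast_nonneg : (0 : ℝ) ≤ n / d) m])
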